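/- Let n ≥ 3 be an integer. For all real numbers λ, μ > 0 with μ ≥ 2λ and all t ≥ 0, the function f(μ) = (λ/μ + μ/λ + λμt/2)^{−(n−2)/2} satisfies μ f′(μ) ≤ −(3(n−2)/10) · (λ/μ + μ/λ + λμt/2)^{−(n−2)/2}. -/

import Mathlib

/-!
Let `G(μ) = λ/μ + μ/λ + λμt/2`. Since `ε = G ^ (-p)`, we have `μ ε'/ε = -p · μ G'/G`, so it suffices
to bound the logarithmic derivative of `G` from below. Here `μ G' = -λ/μ + μ/λ + λμt/2` differs
from `G` only in the sign of `λ/μ`, and `μ ≥ kλ` gives `k² (λ/μ) ≤ μ/λ`; hence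
`μ G'/G ≥ (k² - 1)/(k² + 1)`, which is `3/5` at `k = 2`.
-/

theorem mul_deriv_rpow_neg_le {f : ℝ → ℝ} {x c p : ℝ} (hf : DifferentiableAt ℝ f x)
    (hfx : 0 < f x) (hp : 0 ≤ p) (hc : c * f x ≤ x * deriv f x) :
    x * deriv (fun y => f y ^ (-p)) x ≤ -(p * c) * f x ^ (-p) := by
  have hpow : f x ^ (-p) = f x ^ (-p - 1) * f x := by
    rw [← Real.rpow_add_one hfx.ne', sub_add_cancel]
  calc x * deriv (fun y => f y ^ (-p)) x
      = x * (deriv f x * -p * f x ^ (-p - 1)) := by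
        rw [(hf.hasDerivAt.rpow_const (Or.inl hfx.ne')).deriv]
    _ = -(p * f x ^ (-p - 1) * (x * deriv f x)) := by ring
    _ ≤ -(p * f x ^ (-p - 1) * (c * f x)) := by gcongr
    _ = -(p * c) * f x ^ (-p) := by rw [hpow]; ring

theorem sq_mul_div_le_div {k a b : ℝ} (ha : 0 < a) (hb : 0 < b) (hk : 0 ≤ k) (h : k * a ≤ b) :
    k ^ 2 * (a / b) ≤ b / a := by
  have hsq : (k * a) ^ 2 ≤ b ^ 2 := by gcongr
  rw [← mul_div_assoc, div_le_div_iff₀ hb ha]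
  linarith

/-- The base of the power in the bubble interaction `ε = interactionBase l t x ^ (-(n-2)/2)`, as a
function of the second concentration `x`; on the sphere `t = 1 - cos d` for centres at distance `d`.
-/
noncomputable def interactionBase (l t x : ℝ) : ℝ :=
  l / x + x / l + l * x * t / 2

section InteractionBase

variable {l μ t : ℝ}

theorem interactionBase_pos (hl : 0 < l) (hμ : 0 < μ) (ht : 0 ≤ t) :
    0 < interactionBase l t μ := by
  unfold interactionBase
  positivity

theorem hasDerivAt_interactionBase (l t : ℝ) (hμ : μ ≠ 0) :
    HasDerivAt (interactionBase l t) (-l / μ ^ 2 + 1 / l + l * t / 2) μ := by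
  have hinv : HasDerivAt (fun x => l / x) (-l / μ ^ 2) μ := by
    simpa using (hasDerivAt_const μ l).fun_div (hasDerivAt_id' μ) hμ
  have hlin : HasDerivAt (fun x => l * x * t / 2) (l * t / 2) μ := by
    simpa using (((hasDerivAt_id' μ).const_mul l).mul_const t).div_const 2
  exact (hinv.add ((hasDerivAt_id' μ).div_const l)).add hlin

theorem mul_deriv_interactionBase (l t : ℝ) (hμ : μ ≠ 0) :
    μ * deriv (interactionBase l t) μ = -(l / μ) + μ / l + l * μ * t / 2 := by
  rw [(hasDerivAt_interactionBase l t hμ).deriv]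
  field_simp

theorem mul_interactionBase_le_mul_deriv {k : ℝ} (hl : 0 < l) (hμ : 0 < μ) (ht : 0 ≤ t)
    (hk : 0 ≤ k) (h : k * l ≤ μ) :
    (k ^ 2 - 1) / (k ^ 2 + 1) * interactionBase l t μ ≤ μ * deriv (interactionBase l t) μ := by
  have hratio : k ^ 2 * (l / μ) ≤ μ / l := sq_mul_div_le_div hl hμ hk h
  have hdist : 0 ≤ l * μ * t / 2 := by positivity
  rw [mul_deriv_interactionBase l t hμ.ne', interactionBase, div_mul_eq_mul_div,
    div_le_iff₀ (by positivity)]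
  linarith

end InteractionBase

theorem stmt_12_general {p k l μ t : ℝ} (hp : 0 ≤ p) (hk : 0 ≤ k) (hl : 0 < l) (hμ : 0 < μ)
    (h : k * l ≤ μ) (ht : 0 ≤ t) :
    μ * deriv (fun x : ℝ => (l / x + x / l + l * x * t / 2) ^ (-p)) μ
      ≤ -(p * ((k ^ 2 - 1) / (k ^ 2 + 1))) * (l / μ + μ / l + l * μ * t / 2) ^ (-p) :=
  mul_deriv_rpow_neg_le (hasDerivAt_interactionBase l t hμ.ne').differentiableAt
    (interactionBase_pos hl hμ ht) hp (mul_interactionBase_le_mul_deriv hl hμ ht hk h)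

/-- Core of estimate (eq1.4): when `μ ≥ 2λ`, `μ ∂ε/∂μ ≤ -(3(n-2)/10) ε`. -/
theorem stmt_12 (n : ℕ) (hn : 3 ≤ n) (l μ t : ℝ) (hl : 0 < l) (hμ : 0 < μ)
    (h : 2 * l ≤ μ) (ht : 0 ≤ t) :
    μ * deriv (fun x : ℝ => (l / x + x / l + l * x * t / 2) ^ (-((n : ℝ) - 2) / 2)) μ
      ≤ -(3 * ((n : ℝ) - 2) / 10) * (l / μ + μ / l + l * μ * t / 2) ^ (-((n : ℝ) - 2) / 2) := by
  have hp : 0 ≤ ((n : ℝ) - 2) / 2 := by linarith [show (3 : ℝ) ≤ n from mod_cast hn]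
  have hconst : 3 * ((n : ℝ) - 2) / 10 = ((n : ℝ) - 2) / 2 * ((2 ^ 2 - 1) / (2 ^ 2 + 1)) := by ring
  simpa only [neg_div, hconst] using stmt_12_general hp zero_le_two hl hμ h ht
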